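/- For each integer d with 2 ≤ d ≤ 10, let J_{T^d} ⊆ [0, 3+d] be nonempty, closed, satisfy J_{T^d} = S_{−1,d}(J_{T^d}) ∪ S_{+1,d}(J_{T^d}), and be contained in every nonempty closed subset of [0,3+d] satisfying this set equation. Then v_d ≤ dim_H(J_{T^d}) ≤ v_d + 10^{−14}, where v₂ = 0.55161856837246, v₃ = 0.45183750018171, v₄ = 0.39795943979056, v₅ = 0.36287714809375, v₆ = 0.33770271892130, v₇ = 0.31850809575800, v₈ = 0.30324865557723, v₉ = 0.29074069840192 and v₁₀ = 0.28024518050407. -/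

import Mathlib

open Set MeasureTheory
/-- The two inverse branches of the decimation polynomial `R_d(x) = x((3+d)-x)`
associated to the `d`-dimensional Sierpiński gasket. -/
noncomputable def Sd (d : ℕ) (ε : ℝ) (x : ℝ) : ℝ :=
  ((3 + (d:ℝ)) + ε * Real.sqrt ((3 + (d:ℝ))^2 - 4 * x)) / 2

/-- The numerical values of the Hausdorff dimensions for `2 ≤ d ≤ 10`. -/
noncomputable def v : ℕ → ℝ
  | 2 => 0.55161856837246
  | 3 => 0.45183750018171
  | 4 => 0.39795943979056
  | 5 => 0.36287714809375
  | 6 => 0.33770271892130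
  | 7 => 0.31850809575800
  | 8 => 0.30324865557723
  | 9 => 0.29074069840192
  | 10 => 0.28024518050407
  | _ => 0

section Averaging

variable {X ι : Type} [Fintype ι] {J : Set X} {S : ι → X → X}

/-- The averaging operator `f ↦ ∑ i, w i * f ∘ S i`. -/
def averaging (S : ι → X → X) (w : ι → X → ℝ) : Module.End ℝ (X → ℝ) where
  toFun f x := ∑ i, w i x * f (S i x)
  map_add' f g := by
    ext x
    simp [mul_add, Finset.sum_add_distrib]
  map_smul' c f := by
    ext x
    simp only [Pi.smul_apply, smul_eq_mul, RingHom.id_apply, Finset.mul_sum]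
    exact Finset.sum_congr rfl fun i _ => by ring

theorem averaging_pow_succ_apply (w : ι → X → ℝ) (n : ℕ) (f : X → ℝ) (x : X) :
    (averaging S w ^ (n + 1)) f x = ∑ i, w i x * (averaging S w ^ n) f (S i x) := by
  rw [pow_succ']
  rfl

theorem averaging_pow_mono (hS : ∀ i, MapsTo (S i) J J) {w : ι → X → ℝ}
    (hw : ∀ i, ∀ x ∈ J, 0 ≤ w i x) {f g : X → ℝ} (hfg : ∀ x ∈ J, f x ≤ g x) (n : ℕ) :
    ∀ x ∈ J, (averaging S w ^ n) f x ≤ (averaging S w ^ n) g x := by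
  induction n with
  | zero => simpa using hfg
  | succ n ih =>
    intro x hx
    simp only [averaging_pow_succ_apply]
    exact Finset.sum_le_sum fun i _ => mul_le_mul_of_nonneg_left (ih _ (hS i hx)) (hw i x hx)

theorem averaging_pow_one (hS : ∀ i, MapsTo (S i) J J) {w : ι → X → ℝ}
    (hw : ∀ x ∈ J, ∑ i, w i x = 1) (n : ℕ) :
    ∀ x ∈ J, (averaging S w ^ n) (fun _ => 1) x = 1 := by
  induction n with
  | zero => simp
  | succ n ih =>
    intro x hx
    rw [averaging_pow_succ_apply]
    refine (Finset.sum_congr rfl fun i _ => ?_).trans (hw x hx)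
    rw [ih _ (hS i hx), mul_one]

end Averaging

/-- An iterated function system `S` on a bounded set `J`, contracting by at least one half and
distorting distances near `y` like multiplication by `ρ i y`, up to an error exponential in the
distance. Distinct pieces `S i '' J` are at distance at least one. -/
structure ConformalIFS {X ι : Type} [MetricSpace X] (J : Set X) (S : ι → X → X)
    (ρ : ι → X → ℝ) (κ : ℝ) : Prop where
  nonneg : 0 ≤ κ
  mapsTo : ∀ i, MapsTo (S i) J J
  covers : ∀ x ∈ J, ∃ i, ∃ y ∈ J, S i y = x
  pos : ∀ i, ∀ x ∈ J, 0 < ρ i x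
  le_half : ∀ i, ∀ x ∈ J, ρ i x ≤ 1 / 2
  contract : ∀ i, ∀ x ∈ J, ∀ y ∈ J, dist (S i x) (S i y) ≤ dist x y / 2
  dist_image_le : ∀ i, ∀ x ∈ J, ∀ y ∈ J,
    dist (S i x) (S i y) ≤ ρ i y * Real.exp (κ * dist x y) * dist x y
  dist_le : ∀ i, ∀ x ∈ J, ∀ y ∈ J,
    dist x y ≤ Real.exp (κ * dist (S i x) (S i y)) * dist (S i x) (S i y) / ρ i y
  ratio_le : ∀ i, ∀ x ∈ J, ∀ y ∈ J, ρ i x ≤ ρ i y * Real.exp (κ * dist x y)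
  separated : ∀ i j, i ≠ j → ∀ x ∈ J, ∀ y ∈ J, 1 ≤ dist (S i x) (S j y)

namespace ConformalIFS

variable {X ι : Type} [MetricSpace X] {J : Set X} {S : ι → X → X} {ρ : ι → X → ℝ} {κ : ℝ}

/-- A positive function `F` with `∑ i, ρ i ^ t * F ∘ S i ≤ F` yields covers of every generation with
uniformly bounded weighted sums of radii to the power `t`. -/
theorem exists_cover [Fintype ι] (h : ConformalIFS J S ρ κ) {t : ℝ} (ht : 0 ≤ t) {F : X → ℝ}
    (hF : ∀ x ∈ J, 0 < F x)
    (hL : ∀ x ∈ J, ∑ i, ρ i x ^ t * F (S i x) ≤ F x) {a₀ : X} (ha₀ : a₀ ∈ J) {Δ : ℝ}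
    (hΔ : 0 ≤ Δ) (hJ : J ⊆ Metric.closedBall a₀ Δ) (n : ℕ) :
    ∃ (β : Type) (_ : Fintype β) (a : β → X) (D : β → ℝ),
      (∀ b, a b ∈ J ∧ 0 ≤ D b ∧ D b ≤ Δ / 2 ^ n) ∧
      (J ⊆ ⋃ b, Metric.closedBall (a b) (D b)) ∧
      ∑ b, F (a b) * D b ^ t * Real.exp (2 * κ * t * D b) ≤
        F a₀ * Δ ^ t * Real.exp (2 * κ * t * Δ) := by
  induction n with
  | zero =>
    refine ⟨Unit, inferInstance, fun _ => a₀, fun _ => Δ, fun _ => ⟨ha₀, hΔ, by simp⟩, ?_, by simp⟩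
    exact hJ.trans (subset_iUnion (fun _ : Unit => Metric.closedBall a₀ Δ) ())
  | succ n ih =>
    obtain ⟨β, _, a, D, hD, hcov, hsum⟩ := ih
    refine ⟨β × ι, inferInstance, fun p => S p.2 (a p.1),
      fun p => min (D p.1 / 2) (ρ p.2 (a p.1) * Real.exp (κ * D p.1) * D p.1), ?_, ?_, ?_⟩
    · rintro ⟨b, i⟩
      obtain ⟨ha, h0, h1⟩ := hD b
      have := (h.pos i _ ha).le
      refine ⟨h.mapsTo i ha, le_min (by positivity) (by positivity), (min_le_left _ _).trans ?_⟩
      rw [pow_succ, ← div_div]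
      linarith
    · intro x hx
      obtain ⟨i, y, hy, rfl⟩ := h.covers x hx
      obtain ⟨b, hb⟩ := mem_iUnion.1 (hcov hy)
      rw [Metric.mem_closedBall] at hb
      refine mem_iUnion.2 ⟨(b, i), ?_⟩
      obtain ⟨ha, h0, h1⟩ := hD b
      have hρ := (h.pos i _ ha).le
      have hκ := h.nonneg
      rw [Metric.mem_closedBall]
      refine le_min ((h.contract i y hy _ ha).trans (by linarith))
        ((h.dist_image_le i y hy _ ha).trans ?_)
      simp only
      gcongr
    · refine le_trans ?_ hsum
      rw [Fintype.sum_prod_type]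
      refine Finset.sum_le_sum fun b _ => ?_
      obtain ⟨ha, h0, h1⟩ := hD b
      have hκ := h.nonneg
      calc _ ≤ ∑ i, ρ i (a b) ^ t * F (S i (a b)) *
              (D b ^ t * Real.exp (2 * κ * t * D b)) := by
            refine Finset.sum_le_sum fun i _ => ?_
            have hρ := (h.pos i _ ha).le
            have hFi := (hF _ (h.mapsTo i ha)).le
            set m := min (D b / 2) (ρ i (a b) * Real.exp (κ * D b) * D b) with hm
            have hm0 : 0 ≤ m := le_min (by positivity) (by positivity)
            have h2 : m ^ t ≤ ρ i (a b) ^ t * Real.exp (κ * t * D b) * D b ^ t := by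
              calc m ^ t ≤ (ρ i (a b) * Real.exp (κ * D b) * D b) ^ t :=
                    Real.rpow_le_rpow hm0 (min_le_right _ _) ht
                _ = _ := by
                    rw [Real.mul_rpow (by positivity) h0, Real.mul_rpow hρ (by positivity),
                      ← Real.exp_mul]
                    ring_nf
            have h3 : Real.exp (2 * κ * t * m) ≤ Real.exp (κ * t * D b) := by
              apply Real.exp_le_exp.2
              have : m ≤ D b / 2 := min_le_left _ _
              have h4 : 0 ≤ κ * t := by positivity
              nlinarith
            calc F (S i (a b)) * m ^ t * Real.exp (2 * κ * t * m)
                ≤ F (S i (a b)) * (ρ i (a b) ^ t * Real.exp (κ * t * D b) * D b ^ t) *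
                    Real.exp (κ * t * D b) := by gcongr
              _ = _ := by
                rw [show 2 * κ * t * D b = κ * t * D b + κ * t * D b by ring, Real.exp_add]
                ring
        _ = (∑ i, ρ i (a b) ^ t * F (S i (a b))) * (D b ^ t * Real.exp (2 * κ * t * D b)) := by
            rw [Finset.sum_mul]
        _ ≤ F (a b) * (D b ^ t * Real.exp (2 * κ * t * D b)) := by
            gcongr
            exact hL _ ha
        _ = _ := by ring

/-- A positive function that does not increase under the transfer operator at exponent `t` bounds
the Hausdorff dimension from above by `t`. -/
theorem dimH_le [Fintype ι] (h : ConformalIFS J S ρ κ) (hne : J.Nonempty)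
    (hJ : Bornology.IsBounded J) {t : ℝ} (ht : 0 ≤ t) {F : X → ℝ} {m : ℝ} (hm : 0 < m)
    (hF : ∀ x ∈ J, m ≤ F x) (hL : ∀ x ∈ J, ∑ i, ρ i x ^ t * F (S i x) ≤ F x) :
    dimH J ≤ ENNReal.ofReal t := by
  borelize X
  obtain ⟨a₀, ha₀⟩ := hne
  obtain ⟨Δ, hΔ, hJΔ⟩ := hJ.subset_closedBall_lt 0 a₀
  choose β hβ a D hD hcov hsum using
    h.exists_cover ht (fun x hx => hm.trans_le (hF x hx)) hL ha₀ hΔ.le hJΔ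
  set K := F a₀ * Δ ^ t * Real.exp (2 * κ * t * Δ) with hK
  have hdiam : ∀ n b, Metric.ediam (Metric.closedBall (a n b) (D n b)) ≤
      ENNReal.ofReal (2 * D n b) := by
    intro n b
    rw [ENNReal.ofReal_mul (by norm_num)]
    simpa [Metric.closedEBall_ofReal (hD n b).2.1] using
      Metric.ediam_closedEBall_le (x := a n b) (r := ENNReal.ofReal (D n b))
  have key : μH[t] J ≤ ENNReal.ofReal (2 ^ t * K / m) := by
    refine (Measure.hausdorffMeasure_le_liminf_sum t J (l := Filter.atTop)
      (fun n => ENNReal.ofReal (2 * (Δ / 2 ^ n))) ?_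
      (fun n b => Metric.closedBall (a n b) (D n b)) ?_ ?_).trans ?_
    · rw [← ENNReal.ofReal_zero]
      refine ENNReal.tendsto_ofReal ?_
      have := (tendsto_pow_atTop_nhds_zero_of_lt_one (r := (1 / 2 : ℝ)) (by norm_num)
        (by norm_num)).const_mul (2 * Δ)
      simp only [mul_zero] at this
      refine this.congr fun n => ?_
      rw [one_div, inv_pow]
      ring
    · refine Filter.Eventually.of_forall fun n b => (hdiam n b).trans ?_
      exact ENNReal.ofReal_le_ofReal (by linarith [(hD n b).2.2])
    · exact Filter.Eventually.of_forall hcov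
    · refine Filter.liminf_le_of_le (by isBoundedDefault) fun e he => ?_
      obtain ⟨n, hn⟩ := he.exists
      refine hn.trans ?_
      calc ∑ b, Metric.ediam (Metric.closedBall (a n b) (D n b)) ^ t
          ≤ ∑ b, ENNReal.ofReal ((2 * D n b) ^ t) := by
            refine Finset.sum_le_sum fun b _ => ?_
            rw [← ENNReal.ofReal_rpow_of_nonneg (by linarith [(hD n b).2.1]) ht]
            exact ENNReal.rpow_le_rpow (hdiam n b) ht
        _ = ENNReal.ofReal (∑ b, (2 * D n b) ^ t) := by
            rw [ENNReal.ofReal_sum_of_nonneg]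
            intro b _
            have := (hD n b).2.1
            positivity
        _ ≤ ENNReal.ofReal (2 ^ t * K / m) := by
            apply ENNReal.ofReal_le_ofReal
            rw [le_div_iff₀ hm, Finset.sum_mul]
            refine le_trans ?_ (mul_le_mul_of_nonneg_left (hsum n) (by positivity))
            rw [Finset.mul_sum]
            refine Finset.sum_le_sum fun b _ => ?_
            obtain ⟨ha, h0, -⟩ := hD n b
            have hκ := h.nonneg
            rw [Real.mul_rpow (by norm_num) h0]
            have h1 : 1 ≤ Real.exp (2 * κ * t * D n b) := Real.one_le_exp (by positivity)
            have h2 := hF _ ha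
            calc (2 : ℝ) ^ t * D n b ^ t * m = 2 ^ t * (m * D n b ^ t * 1) := by ring
              _ ≤ _ := by
                have : 0 ≤ F (a n b) := hm.le.trans h2
                gcongr
  have := dimH_le_of_hausdorffMeasure_ne_top (s := J) (d := t.toNNReal)
    (by rw [Real.coe_toNNReal t ht]; exact (key.trans_lt ENNReal.ofReal_lt_top).ne)
  simpa [ENNReal.ofReal] using this

/-- One averaging step takes the indicator of a small ball about `S i b` below a multiple of the
indicator of a ball about `b`. -/
theorem averaging_indicator_le [Fintype ι] (h : ConformalIFS J S ρ κ) {t : ℝ} (ht : 0 ≤ t)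
    {F : X → ℝ} (hF0 : ∀ x ∈ J, 0 < F x)
    (hFκ : ∀ x ∈ J, ∀ y ∈ J, F x ≤ F y * Real.exp (κ * dist x y)) {w : ι → X → ℝ}
    (hwF : ∀ i, ∀ x ∈ J, w i x ≤ ρ i x ^ t * F (S i x) / F x)
    {Δ : ℝ} (hΔ : ∀ x ∈ J, ∀ y ∈ J, dist x y ≤ Δ) {i : ι} {b : X} (hb : b ∈ J) {D E : ℝ}
    (hD : 0 < D) (hD1 : D < 1) (hE : E = min (Real.exp (κ * D) * D / ρ i b) Δ) :
    ∀ x ∈ J, averaging S w ((Metric.closedBall (S i b) D).indicator fun _ => 1) x ≤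
      ρ i b ^ t * F (S i b) / F b * Real.exp ((2 + t) * κ * E) *
        (Metric.closedBall b E).indicator (fun _ => 1) x := by
  intro x hx
  have hκ := h.nonneg
  have hρb := h.pos i b hb
  have hFb := hF0 b hb
  have hFib := hF0 _ (h.mapsTo i hb)
  have hE0 : 0 ≤ E := by
    rw [hE]
    exact le_min (by positivity) (dist_nonneg.trans (hΔ x hx x hx))
  have hsum : averaging S w ((Metric.closedBall (S i b) D).indicator fun _ => 1) x =
      w i x * (Metric.closedBall (S i b) D).indicator (fun _ => 1) (S i x) := by
    refine Finset.sum_eq_single i (fun j _ hji => ?_) (by simp)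
    rw [indicator_of_notMem, mul_zero]
    rw [Metric.mem_closedBall, not_le]
    exact hD1.trans_le (h.separated j i hji x hx b hb)
  rw [hsum]
  by_cases hmem : S i x ∈ Metric.closedBall (S i b) D
  · have hmem' := Metric.mem_closedBall.1 hmem
    have hxE : dist x b ≤ E := by
      rw [hE]
      refine le_min ((h.dist_le i x hx b hb).trans ?_) (hΔ x hx b hb)
      gcongr
    rw [indicator_of_mem hmem, indicator_of_mem (Metric.mem_closedBall.2 hxE), mul_one, mul_one]
    refine (hwF i x hx).trans ?_
    have hρx := h.pos i x hx
    have hFx := hF0 x hx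
    have h1 : ρ i x ^ t ≤ ρ i b ^ t * Real.exp (t * κ * E) := by
      calc ρ i x ^ t ≤ (ρ i b * Real.exp (κ * E)) ^ t := by
            refine Real.rpow_le_rpow hρx.le ((h.ratio_le i x hx b hb).trans ?_) ht
            gcongr
        _ = _ := by
            rw [Real.mul_rpow hρb.le (by positivity), ← Real.exp_mul]
            ring_nf
    have h2 : F (S i x) ≤ F (S i b) * Real.exp (κ * E) := by
      refine (hFκ _ (h.mapsTo i hx) _ (h.mapsTo i hb)).trans ?_
      have := h.contract i x hx b hb
      have h0 : 0 ≤ dist x b := dist_nonneg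
      gcongr
      linarith
    have h3 : F b ≤ F x * Real.exp (κ * E) := by
      refine (hFκ b hb x hx).trans ?_
      rw [dist_comm]
      gcongr
    have hFix := (hF0 _ (h.mapsTo i hx)).le
    rw [div_le_iff₀ hFx]
    calc ρ i x ^ t * F (S i x)
        ≤ (ρ i b ^ t * Real.exp (t * κ * E)) * (F (S i b) * Real.exp (κ * E)) := by gcongr
      _ = ρ i b ^ t * F (S i b) / F b * (Real.exp (t * κ * E) * Real.exp (κ * E)) * F b := by
          field_simp
      _ ≤ ρ i b ^ t * F (S i b) / F b * (Real.exp (t * κ * E) * Real.exp (κ * E)) *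
            (F x * Real.exp (κ * E)) := by gcongr
      _ = ρ i b ^ t * F (S i b) / F b *
            (Real.exp (t * κ * E) * Real.exp (κ * E) * Real.exp (κ * E)) * F x := by ring
      _ = _ := by
          rw [← Real.exp_add, ← Real.exp_add]
          ring_nf
  · rw [indicator_of_notMem hmem, mul_zero]
    exact mul_nonneg (by positivity) (indicator_nonneg (fun _ _ => zero_le_one) _)

/-- The iterated averages of the indicator of a ball of radius `D` are eventually at most a constant
times `D ^ t`. -/
theorem averaging_pow_indicator_le [Fintype ι] (h : ConformalIFS J S ρ κ) {t : ℝ} (ht : 0 ≤ t)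
    (ht1 : t ≤ 1) {F : X → ℝ} {m : ℝ} (hm : 0 < m) (hF : ∀ x ∈ J, m ≤ F x)
    (hFκ : ∀ x ∈ J, ∀ y ∈ J, F x ≤ F y * Real.exp (κ * dist x y)) {w : ι → X → ℝ}
    (hw : ∀ i, ∀ x ∈ J, 0 ≤ w i x) (hw1 : ∀ x ∈ J, ∑ i, w i x = 1)
    (hwF : ∀ i, ∀ x ∈ J, w i x ≤ ρ i x ^ t * F (S i x) / F x)
    {Δ : ℝ} (hΔ1 : 1 ≤ Δ) (hΔ : ∀ x ∈ J, ∀ y ∈ J, dist x y ≤ Δ) (n : ℕ) :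
    ∀ a ∈ J, ∀ D, 0 < D → D ≤ Δ → 1 ≤ 2 ^ n * D → ∀ x ∈ J,
      (averaging S w ^ n) ((Metric.closedBall a D).indicator fun _ => 1) x ≤
        2 * Real.exp (8 * κ * Δ) / m * F a * D ^ t * Real.exp (-(8 * κ * D)) := by
  have hκ := h.nonneg
  have large : ∀ n, ∀ a ∈ J, ∀ D, 1 / 2 ≤ D → D ≤ Δ → ∀ x ∈ J,
      (averaging S w ^ n) ((Metric.closedBall a D).indicator fun _ => 1) x ≤
        2 * Real.exp (8 * κ * Δ) / m * F a * D ^ t * Real.exp (-(8 * κ * D)) := by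
    intro n a ha D hD hDΔ x hx
    calc _ ≤ (averaging S w ^ n) (fun _ => 1) x :=
          averaging_pow_mono h.mapsTo hw
            (fun y _ => indicator_le_self' (fun _ _ => zero_le_one) y) n x hx
      _ = 1 := averaging_pow_one h.mapsTo hw1 n x hx
      _ = 2 * Real.exp (8 * κ * Δ) / m * m * (1 / 2) * Real.exp (-(8 * κ * Δ)) := by
          rw [Real.exp_neg]
          field_simp
      _ ≤ _ := by
          have h1 : (1 / 2 : ℝ) ≤ D ^ t := by
            calc (1 / 2 : ℝ) = (1 / 2) ^ (1 : ℝ) := by simp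
              _ ≤ (1 / 2) ^ t :=
                Real.rpow_le_rpow_of_exponent_ge (by norm_num) (by norm_num) ht1
              _ ≤ D ^ t := Real.rpow_le_rpow (by norm_num) hD ht
          have h2 := hF a ha
          have h3 := hm.le.trans h2
          gcongr
  induction n with
  | zero =>
    intro a ha D _ hDΔ hD x hx
    exact large 0 a ha D (by simp at hD; linarith) hDΔ x hx
  | succ n ih =>
    intro a ha D hD hDΔ hDn x hx
    by_cases hD2 : 1 / 2 ≤ D
    · exact large _ a ha D hD2 hDΔ x hx
    obtain ⟨i, b, hb, rfl⟩ := h.covers a ha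
    obtain ⟨E, hE⟩ : ∃ E, E = min (Real.exp (κ * D) * D / ρ i b) Δ := ⟨_, rfl⟩
    have hρ := h.pos i b hb
    have hFb := hm.trans_le (hF b hb)
    have hFib := hm.trans_le (hF _ ha)
    have hDE : 2 * D ≤ E := by
      rw [hE]
      refine le_min ?_ (by linarith)
      rw [le_div_iff₀ hρ]
      have h1 : 1 ≤ Real.exp (κ * D) := Real.one_le_exp (by positivity)
      have h2 := h.le_half i b hb
      nlinarith
    have hE0 : 0 < E := by linarith
    have hρE : ρ i b ^ t * E ^ t ≤ D ^ t * Real.exp (t * κ * D) := by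
      calc ρ i b ^ t * E ^ t ≤ ρ i b ^ t * (Real.exp (κ * D) * D / ρ i b) ^ t := by
            have : E ≤ Real.exp (κ * D) * D / ρ i b := hE.trans_le (min_le_left _ _)
            gcongr
        _ = (Real.exp (κ * D) * D) ^ t := by
            rw [← Real.mul_rpow hρ.le (by positivity), mul_div_cancel₀ _ hρ.ne']
        _ = _ := by
            rw [Real.mul_rpow (by positivity) hD.le, ← Real.exp_mul]
            ring_nf
    have step := h.averaging_indicator_le ht (fun x hx => hm.trans_le (hF x hx)) hFκ hwF hΔ hb
      hD (by linarith) hE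
    set G := ρ i b ^ t * F (S i b) / F b * Real.exp ((2 + t) * κ * E) with hG
    have hG0 : 0 ≤ G := by positivity
    have hmono := averaging_pow_mono h.mapsTo hw (g := G • (Metric.closedBall b E).indicator
      fun _ => 1) step n x hx
    rw [map_smul, Pi.smul_apply, smul_eq_mul] at hmono
    have hpow : (averaging S w ^ (n + 1)) ((Metric.closedBall (S i b) D).indicator fun _ => 1) =
        (averaging S w ^ n)
          (averaging S w ((Metric.closedBall (S i b) D).indicator fun _ => 1)) := by
      rw [pow_succ]
      rfl
    rw [hpow]
    have hIH := ih b hb E hE0 (hE.trans_le (min_le_right _ _)) (by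
      have : (0 : ℝ) < 2 ^ n := by positivity
      rw [pow_succ] at hDn
      nlinarith) x hx
    have hexp : Real.exp (t * κ * D) * Real.exp ((2 + t) * κ * E) * Real.exp (-(8 * κ * E)) ≤
        Real.exp (-(8 * κ * D)) := by
      rw [← Real.exp_add, ← Real.exp_add]
      apply Real.exp_le_exp.2
      have h1 : t * κ * D ≤ κ * D := by
        have : 0 ≤ κ * D := by positivity
        nlinarith
      have h2 : (2 + t) * κ * E ≤ 3 * (κ * E) := by
        have : 0 ≤ κ * E := by positivity
        nlinarith
      have h3 : κ * (2 * D) ≤ κ * E := by gcongr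
      have h4 : 0 ≤ κ * D := by positivity
      linarith
    calc _ ≤ G * (averaging S w ^ n) ((Metric.closedBall b E).indicator fun _ => 1) x := hmono
      _ ≤ G * (2 * Real.exp (8 * κ * Δ) / m * F b * E ^ t * Real.exp (-(8 * κ * E))) := by gcongr
      _ = 2 * Real.exp (8 * κ * Δ) / m * F (S i b) * (ρ i b ^ t * E ^ t) *
            (Real.exp ((2 + t) * κ * E) * Real.exp (-(8 * κ * E))) := by
          rw [hG]
          field_simp
      _ ≤ 2 * Real.exp (8 * κ * Δ) / m * F (S i b) * (D ^ t * Real.exp (t * κ * D)) *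
            (Real.exp ((2 + t) * κ * E) * Real.exp (-(8 * κ * E))) := by gcongr
      _ = 2 * Real.exp (8 * κ * Δ) / m * F (S i b) * D ^ t *
            (Real.exp (t * κ * D) * Real.exp ((2 + t) * κ * E) * Real.exp (-(8 * κ * E))) := by
          ring
      _ ≤ _ := by gcongr

/-- A positive function that does not decrease under the transfer operator at exponent `t` bounds
the Hausdorff dimension from below by `t`. -/
theorem le_dimH [Fintype ι] (h : ConformalIFS J S ρ κ) (hne : J.Nonempty) (hJ : IsCompact J)
    {t : ℝ} (ht : 0 < t) (ht1 : t ≤ 1) {F : X → ℝ} {m M : ℝ} (hm : 0 < m)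
    (hF : ∀ x ∈ J, m ≤ F x) (hFM : ∀ x ∈ J, F x ≤ M)
    (hFκ : ∀ x ∈ J, ∀ y ∈ J, F x ≤ F y * Real.exp (κ * dist x y))
    (hL : ∀ x ∈ J, F x ≤ ∑ i, ρ i x ^ t * F (S i x)) :
    ENNReal.ofReal t ≤ dimH J := by
  borelize X
  obtain ⟨x₀, hx₀⟩ := hne
  have hM : 0 < M := hm.trans_le ((hF x₀ hx₀).trans (hFM x₀ hx₀))
  have hκ := h.nonneg
  obtain ⟨Δ, hΔ1, hΔ⟩ : ∃ Δ : ℝ, 1 ≤ Δ ∧ ∀ x ∈ J, ∀ y ∈ J, dist x y ≤ Δ :=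
    ⟨max 1 (Metric.diam J), le_max_left _ _, fun x hx y hy =>
      (Metric.dist_le_diam_of_mem hJ.isBounded hx hy).trans (le_max_right _ _)⟩
  set w : ι → X → ℝ := fun i x => ρ i x ^ t * F (S i x) / ∑ j, ρ j x ^ t * F (S j x) with hwdef
  have hterm : ∀ i, ∀ x ∈ J, 0 ≤ ρ i x ^ t * F (S i x) := fun i x hx =>
    mul_nonneg (Real.rpow_nonneg (h.pos i x hx).le _) (hm.le.trans (hF _ (h.mapsTo i hx)))
  have hLpos : ∀ x ∈ J, 0 < ∑ j, ρ j x ^ t * F (S j x) := fun x hx =>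
    hm.trans_le ((hF x hx).trans (hL x hx))
  have hw : ∀ i, ∀ x ∈ J, 0 ≤ w i x := fun i x hx => div_nonneg (hterm i x hx) (hLpos x hx).le
  have hw1 : ∀ x ∈ J, ∑ i, w i x = 1 := fun x hx => by
    rw [hwdef, ← Finset.sum_div, div_self (hLpos x hx).ne']
  have hwF : ∀ i, ∀ x ∈ J, w i x ≤ ρ i x ^ t * F (S i x) / F x := fun i x hx =>
    div_le_div_of_nonneg_left (hterm i x hx) (hm.trans_le (hF x hx)) (hL x hx)
  set C := 2 * Real.exp (8 * κ * Δ) / m * M with hC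
  have hC0 : 0 < C := by positivity
  have hball : ∀ a ∈ J, ∀ D, 0 < D → D ≤ Δ → ∀ n, 1 ≤ 2 ^ n * D →
      (averaging S w ^ n) ((Metric.closedBall a D).indicator fun _ => 1) x₀ ≤ C * D ^ t := by
    intro a ha D hD hDΔ n hn
    refine (h.averaging_pow_indicator_le ht.le ht1 hm hF hFκ hw hw1 hwF hΔ1 hΔ n a ha D hD hDΔ hn
      x₀ hx₀).trans ?_
    have h1 : Real.exp (-(8 * κ * D)) ≤ 1 := Real.exp_le_one_iff.2 (by
      have : 0 ≤ 8 * κ * D := by positivity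
      linarith)
    have h2 := hFM a ha
    calc _ ≤ 2 * Real.exp (8 * κ * Δ) / m * M * D ^ t * 1 := by gcongr
      _ = _ := by rw [mul_one]
  have hcontent : ∀ T : ℕ → Set X, J ⊆ ⋃ k, T k →
      (∀ k, Metric.ediam (T k) ≤ ENNReal.ofReal (1 / 2)) →
      ENNReal.ofReal (1 / (2 * C)) ≤ ∑' k, ⨆ _ : (T k).Nonempty, Metric.ediam (T k) ^ t := by
    intro T hT hTd
    set e : ℕ → ℝ := fun k => min (1 / 2) ((1 / (4 * C) * (1 / 2) ^ k) ^ (1 / t)) with he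
    have he0 : ∀ k, 0 < e k := fun k => lt_min (by norm_num) (by positivity)
    have het : ∀ k, e k ^ t ≤ 1 / (4 * C) * (1 / 2) ^ k := fun k => by
      calc e k ^ t ≤ ((1 / (4 * C) * (1 / 2) ^ k) ^ (1 / t)) ^ t :=
            Real.rpow_le_rpow (he0 k).le (min_le_right _ _) ht.le
        _ = _ := by
            rw [← Real.rpow_mul (by positivity), one_div_mul_cancel ht.ne', Real.rpow_one]
    have hfin : ∀ k, Metric.ediam (T k) ≠ ⊤ := fun k =>
      ((hTd k).trans_lt ENNReal.ofReal_lt_top).ne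
    set D : ℕ → ℝ := fun k => Metric.diam (T k) + e k with hD
    have hD0 : ∀ k, 0 < D k := fun k => add_pos_of_nonneg_of_pos Metric.diam_nonneg (he0 k)
    have hDΔ : ∀ k, D k ≤ Δ := fun k => by
      have h1 : Metric.diam (T k) ≤ 1 / 2 :=
        ENNReal.toReal_le_of_le_ofReal (by norm_num) (hTd k)
      have h2 : e k ≤ 1 / 2 := min_le_left _ _
      simp only [hD]
      linarith
    classical
    obtain ⟨a, haJ, haT⟩ : ∃ a : ℕ → X, (∀ k, a k ∈ J) ∧
        ∀ k, (T k ∩ J).Nonempty → a k ∈ T k := by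
      refine ⟨fun k => if hk : (T k ∩ J).Nonempty then hk.some else x₀, fun k => ?_, fun k hk => ?_⟩
      · by_cases hk : (T k ∩ J).Nonempty
        · simpa [hk] using hk.some_mem.2
        · simpa [hk] using hx₀
      · simpa [hk] using hk.some_mem.1
    have hcov : J ⊆ ⋃ k, ⋃ _ : (T k).Nonempty, Metric.ball (a k) (D k) := by
      intro x hx
      obtain ⟨k, hk⟩ := mem_iUnion.1 (hT hx)
      refine mem_iUnion₂.2 ⟨k, ⟨x, hk⟩, ?_⟩
      rw [Metric.mem_ball]
      exact (Metric.dist_le_diam_of_mem' (hfin k) hk (haT k ⟨x, hk, hx⟩)).trans_lt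
        (lt_add_of_pos_right _ (he0 k))
    obtain ⟨s, hs⟩ := hJ.elim_finite_subcover _
      (fun k => isOpen_iUnion fun _ : (T k).Nonempty => Metric.isOpen_ball) hcov
    obtain ⟨n, hn⟩ : ∃ n : ℕ, ∀ k ∈ s, 1 ≤ 2 ^ n * D k := by
      have : ∀ᶠ n : ℕ in Filter.atTop, ∀ k ∈ s, 1 ≤ 2 ^ n * D k := by
        rw [Filter.eventually_all_finset]
        intro k _
        exact ((tendsto_pow_atTop_atTop_of_one_lt (r := (2 : ℝ)) (by norm_num)).atTop_mul_const
          (hD0 k)).eventually_ge_atTop 1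
      exact this.exists
    set s' := s.filter fun k => (T k).Nonempty with hs'
    have hone : 1 ≤ ∑ k ∈ s', C * D k ^ t := by
      calc (1 : ℝ) = (averaging S w ^ n) (fun _ => 1) x₀ :=
            (averaging_pow_one h.mapsTo hw1 n x₀ hx₀).symm
        _ ≤ (averaging S w ^ n)
              (∑ k ∈ s', (Metric.closedBall (a k) (D k)).indicator fun _ => 1) x₀ := by
            refine averaging_pow_mono h.mapsTo hw (fun x hx => ?_) n x₀ hx₀
            obtain ⟨k, hk, hxk⟩ := mem_iUnion₂.1 (hs hx)
            obtain ⟨hTk, hxk⟩ := mem_iUnion.1 hxk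
            rw [Finset.sum_apply]
            refine le_trans ?_ (Finset.single_le_sum (f := fun k =>
              (Metric.closedBall (a k) (D k)).indicator (fun _ => (1 : ℝ)) x)
              (fun k _ => indicator_nonneg (fun _ _ => zero_le_one) x)
              (Finset.mem_filter.2 ⟨hk, hTk⟩))
            simp only [indicator_of_mem (Metric.ball_subset_closedBall hxk), le_refl]
        _ = ∑ k ∈ s', (averaging S w ^ n)
              ((Metric.closedBall (a k) (D k)).indicator fun _ => 1) x₀ := by
            rw [map_sum, Finset.sum_apply]
        _ ≤ _ := Finset.sum_le_sum fun k hk => hball _ (haJ k) _ (hD0 k) (hDΔ k) n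
            (hn k (Finset.mem_filter.1 hk).1)
    have hgeom : ∑ k ∈ s', 1 / (4 * C) * (1 / 2 : ℝ) ^ k ≤ 1 / (2 * C) := by
      rw [← Finset.mul_sum]
      have h1 : ∑ k ∈ s', (1 / 2 : ℝ) ^ k ≤ 2 := by
        refine le_of_le_of_eq ?_ tsum_geometric_two
        exact summable_geometric_two.sum_le_tsum _ fun _ _ => by positivity
      calc 1 / (4 * C) * ∑ k ∈ s', (1 / 2 : ℝ) ^ k ≤ 1 / (4 * C) * 2 := by gcongr
        _ = _ := by
          field_simp
          norm_num
    have hreal : 1 / (2 * C) ≤ ∑ k ∈ s', Metric.diam (T k) ^ t := by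
      have h1 : ∑ k ∈ s', D k ^ t ≤
          ∑ k ∈ s', (Metric.diam (T k) ^ t + 1 / (4 * C) * (1 / 2) ^ k) :=
        Finset.sum_le_sum fun k _ =>
          (Real.rpow_add_le_add_rpow Metric.diam_nonneg (he0 k).le ht.le ht1).trans
            (by linarith [het k])
      rw [Finset.sum_add_distrib] at h1
      rw [← Finset.mul_sum] at hone
      have h2 : 1 / C ≤ ∑ k ∈ s', D k ^ t := by
        rw [div_le_iff₀ hC0]
        linarith
      have h3 : 1 / C = 1 / (2 * C) + 1 / (2 * C) := by
        field_simp
        norm_num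
      linarith
    calc ENNReal.ofReal (1 / (2 * C)) ≤ ENNReal.ofReal (∑ k ∈ s', Metric.diam (T k) ^ t) :=
          ENNReal.ofReal_le_ofReal hreal
      _ = ∑ k ∈ s', Metric.ediam (T k) ^ t := by
          rw [ENNReal.ofReal_sum_of_nonneg fun k _ => Real.rpow_nonneg Metric.diam_nonneg _]
          refine Finset.sum_congr rfl fun k _ => ?_
          rw [← ENNReal.ofReal_rpow_of_nonneg Metric.diam_nonneg ht.le, Metric.diam,
            ENNReal.ofReal_toReal (hfin k)]
      _ ≤ ∑ k ∈ s', ⨆ _ : (T k).Nonempty, Metric.ediam (T k) ^ t :=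
          Finset.sum_le_sum fun k hk =>
            le_iSup (fun _ : (T k).Nonempty => Metric.ediam (T k) ^ t) (Finset.mem_filter.1 hk).2
      _ ≤ _ := ENNReal.sum_le_tsum _
  have hpos : μH[t] J ≠ 0 := by
    have h1 : ENNReal.ofReal (1 / (2 * C)) ≤ μH[t] J := by
      rw [Measure.hausdorffMeasure_apply]
      refine le_iSup₂_of_le (ENNReal.ofReal (1 / 2)) (by simp) ?_
      exact le_iInf fun T => le_iInf fun hT => le_iInf fun hTd => hcontent T hT hTd
    have h2 : 0 < ENNReal.ofReal (1 / (2 * C)) := ENNReal.ofReal_pos.2 (by positivity)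
    exact (h2.trans_le h1).ne'
  have := le_dimH_of_hausdorffMeasure_ne_zero (s := J) (d := t.toNNReal)
    (by rwa [Real.coe_toNNReal t ht.le])
  simpa [ENNReal.ofReal] using this

end ConformalIFS

section Branches

variable {d : ℕ} {x y : ℝ}

theorem two_le_sqrt_disc (hd : 2 ≤ d) (hx : x ∈ Icc 0 (3 + (d : ℝ))) :
    2 ≤ √((3 + (d : ℝ)) ^ 2 - 4 * x) := by
  have : (2 : ℝ) ≤ d := by exact_mod_cast hd
  refine Real.le_sqrt_of_sq_le ?_
  nlinarith [hx.2]

theorem sqrt_disc_sq (hd : 2 ≤ d) (hx : x ∈ Icc 0 (3 + (d : ℝ))) :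
    √((3 + (d : ℝ)) ^ 2 - 4 * x) ^ 2 = (3 + (d : ℝ)) ^ 2 - 4 * x := by
  have : (2 : ℝ) ≤ d := by exact_mod_cast hd
  refine Real.sq_sqrt ?_
  nlinarith [hx.2]

/-- The two inverse branches, indexed by the sign of the square root. -/
noncomputable def branch (d : ℕ) (b : Bool) : ℝ → ℝ :=
  Sd d (bif b then 1 else -1)

theorem dist_branch (d : ℕ) (b : Bool) (x y : ℝ) :
    dist (branch d b x) (branch d b y) =
      |√((3 + (d : ℝ)) ^ 2 - 4 * x) - √((3 + (d : ℝ)) ^ 2 - 4 * y)| / 2 := by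
  rw [Real.dist_eq, ← abs_two (α := ℝ), ← abs_div]
  cases b
  · rw [← abs_neg]
    congr 1
    simp only [branch, Sd, cond_false]
    ring
  · congr 1
    simp only [branch, Sd, cond_true]
    ring

theorem dist_branch_mul (hd : 2 ≤ d) (b : Bool) (hx : x ∈ Icc 0 (3 + (d : ℝ)))
    (hy : y ∈ Icc 0 (3 + (d : ℝ))) :
    dist (branch d b x) (branch d b y) *
      (√((3 + (d : ℝ)) ^ 2 - 4 * x) + √((3 + (d : ℝ)) ^ 2 - 4 * y)) = 2 * dist x y := by
  have hx2 := two_le_sqrt_disc hd hx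
  have hy2 := two_le_sqrt_disc hd hy
  have hxs := sqrt_disc_sq hd hx
  have hys := sqrt_disc_sq hd hy
  rw [dist_branch, Real.dist_eq]
  set p := √((3 + (d : ℝ)) ^ 2 - 4 * x)
  set q := √((3 + (d : ℝ)) ^ 2 - 4 * y)
  calc |p - q| / 2 * (p + q) = |p - q| * |p + q| / 2 := by
        rw [abs_of_nonneg (by linarith : 0 ≤ p + q)]
        ring
    _ = |p ^ 2 - q ^ 2| / 2 := by
        rw [← abs_mul]
        ring_nf
    _ = |-4 * (x - y)| / 2 := by
        rw [hxs, hys]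
        ring_nf
    _ = _ := by
        rw [abs_mul]
        norm_num
        ring

theorem conformalIFS_branch (hd : 2 ≤ d) {J : Set ℝ} (hJ : J ⊆ Icc 0 (3 + (d : ℝ)))
    (heq : J = Sd d (-1) '' J ∪ Sd d 1 '' J) {κ : ℝ} (hκ : 1 ≤ κ) :
    ConformalIFS J (branch d) (fun _ x => 1 / √((3 + (d : ℝ)) ^ 2 - 4 * x)) κ := by
  have one_add_le : ∀ {a b : ℝ}, 0 ≤ a → a ≤ b → 1 + a ≤ Real.exp (κ * b) := by
    intro a b ha hab
    have := Real.add_one_le_exp (κ * b)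
    nlinarith
  have hcontract : ∀ b, ∀ x ∈ J, ∀ y ∈ J,
      dist (branch d b x) (branch d b y) ≤ dist x y / 2 := by
    intro b x hx y hy
    have h1 := dist_branch_mul hd b (hJ hx) (hJ hy)
    have h2 := two_le_sqrt_disc hd (hJ hx)
    have h3 := two_le_sqrt_disc hd (hJ hy)
    have h4 : 0 ≤ dist (branch d b x) (branch d b y) := dist_nonneg
    nlinarith
  refine ⟨by linarith, ?_, ?_, ?_, ?_, hcontract, ?_, ?_, ?_, ?_⟩
  · intro b x hx
    rw [heq]
    cases b
    · exact Or.inl ⟨x, hx, rfl⟩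
    · exact Or.inr ⟨x, hx, rfl⟩
  · intro x hx
    rw [heq] at hx
    rcases hx with ⟨y, hy, rfl⟩ | ⟨y, hy, rfl⟩
    · exact ⟨false, y, hy, rfl⟩
    · exact ⟨true, y, hy, rfl⟩
  · intro b x hx
    have := two_le_sqrt_disc hd (hJ hx)
    positivity
  · intro b x hx
    exact one_div_le_one_div_of_le (by norm_num) (two_le_sqrt_disc hd (hJ hx))
  · intro b x hx y hy
    have h1 := dist_branch_mul hd b (hJ hx) (hJ hy)
    have h2 := two_le_sqrt_disc hd (hJ hx)
    have h3 := two_le_sqrt_disc hd (hJ hy)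
    have h4 := hcontract b x hx y hy
    have h5 : 0 ≤ dist (branch d b x) (branch d b y) := dist_nonneg
    have h6 := dist_branch d b x y
    have h7 : 0 ≤ dist x y := dist_nonneg
    have h8 := one_add_le h7 le_rfl
    set p := √((3 + (d : ℝ)) ^ 2 - 4 * x)
    set q := √((3 + (d : ℝ)) ^ 2 - 4 * y)
    set δ := dist (branch d b x) (branch d b y)
    rw [one_div_mul_eq_div, div_mul_eq_mul_div, le_div_iff₀ (by linarith)]
    have h9 : q - p ≤ 2 * δ := by
      have := neg_abs_le (p - q)
      linarith
    calc δ * q ≤ dist x y + δ ^ 2 := by nlinarith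
      _ ≤ (1 + dist x y) * dist x y := by nlinarith
      _ ≤ _ := by gcongr
  · intro b x hx y hy
    have h1 := dist_branch_mul hd b (hJ hx) (hJ hy)
    have h2 := two_le_sqrt_disc hd (hJ hx)
    have h3 := two_le_sqrt_disc hd (hJ hy)
    have h5 : 0 ≤ dist (branch d b x) (branch d b y) := dist_nonneg
    have h6 := dist_branch d b x y
    have h8 := one_add_le h5 le_rfl
    set p := √((3 + (d : ℝ)) ^ 2 - 4 * x)
    set q := √((3 + (d : ℝ)) ^ 2 - 4 * y)
    set δ := dist (branch d b x) (branch d b y)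
    rw [div_div_eq_mul_div, div_one]
    have h9 : p - q ≤ 2 * δ := by
      have := le_abs_self (p - q)
      linarith
    calc dist x y ≤ δ * (q + δ) := by nlinarith
      _ ≤ (1 + δ) * δ * q := by nlinarith [mul_nonneg h5 h5]
      _ ≤ _ := by gcongr
  · intro b x hx y hy
    have h2 := two_le_sqrt_disc hd (hJ hx)
    have h3 := two_le_sqrt_disc hd (hJ hy)
    have h4 := hcontract b x hx y hy
    have h5 : 0 ≤ dist (branch d b x) (branch d b y) := dist_nonneg
    have h6 := dist_branch d b x y
    have h7 : 0 ≤ dist x y := dist_nonneg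
    have h8 := one_add_le h7 le_rfl
    set p := √((3 + (d : ℝ)) ^ 2 - 4 * x)
    set q := √((3 + (d : ℝ)) ^ 2 - 4 * y)
    set δ := dist (branch d b x) (branch d b y)
    rw [one_div_mul_eq_div, div_le_div_iff₀ (by linarith) (by linarith)]
    have h9 : q - p ≤ 2 * δ := by
      have := neg_abs_le (p - q)
      linarith
    calc 1 * q ≤ (1 + dist x y) * p := by nlinarith
      _ ≤ _ := by gcongr
  · have hsep : ∀ x ∈ J, ∀ y ∈ J, 1 ≤ dist (branch d true x) (branch d false y) := by
      intro x hx y hy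
      have h2 := two_le_sqrt_disc hd (hJ hx)
      have h3 := two_le_sqrt_disc hd (hJ hy)
      rw [Real.dist_eq]
      refine le_trans ?_ (le_abs_self _)
      simp only [branch, Sd, cond_true, cond_false]
      linarith
    rintro (_ | _) (_ | _) hij x hx y hy
    · exact absurd rfl hij
    · rw [dist_comm]
      exact hsep y hy x hx
    · exact hsep x hx y hy
    · exact absurd rfl hij

end Branches

/-! ### Integer polynomials as coefficient lists -/

namespace CoeffList

/-- Evaluation of the polynomial with the given coefficients, constant term first. -/
def eval : List ℤ → ℝ → ℝ
  | [], _ => 0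
  | a :: l, x => a + x * eval l x

/-- Sum of two polynomials. -/
def add : List ℤ → List ℤ → List ℤ
  | [], m => m
  | a :: l, [] => a :: l
  | a :: l, b :: m => (a + b) :: add l m

/-- Integer multiple of a polynomial. -/
def smul (a : ℤ) (l : List ℤ) : List ℤ := l.map (a * ·)

/-- Product of two polynomials. -/
def mul : List ℤ → List ℤ → List ℤ
  | [], _ => []
  | a :: l, m => add (smul a m) (0 :: mul l m)

/-- Derivative of a polynomial. -/
def deriv : List ℤ → List ℤ
  | [] => []
  | _ :: l => add l (0 :: deriv l)

/-- Sum of the absolute values of the coefficients. -/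
def norm : List ℤ → ℤ
  | [] => 0
  | a :: l => |a| + norm l

/-- A lower bound for the values on `[-1, 1]`. -/
def lower : List ℤ → ℤ
  | [] => 0
  | a :: l => a - norm l

/-- The coefficients of even index. -/
def evens : List ℤ → List ℤ
  | [] => []
  | [a] => [a]
  | a :: _ :: l => a :: evens l

/-- Substitution of `(c - 2 - 2 * x) / c`, cleared of denominators. -/
def subst (c : ℤ) : List ℤ → List ℤ
  | [] => []
  | a :: l => add [a * c ^ (l.length + 1)] (mul [c - 2, -2] (subst c l))

theorem eval_add (l m : List ℤ) (x : ℝ) : eval (add l m) x = eval l x + eval m x := by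
  induction l generalizing m with
  | nil => simp [add, eval]
  | cons a l ih =>
    cases m with
    | nil => simp [add, eval]
    | cons b m =>
      simp only [add, eval, ih]
      push_cast
      ring

theorem eval_smul (a : ℤ) (l : List ℤ) (x : ℝ) : eval (smul a l) x = a * eval l x := by
  induction l with
  | nil => simp [smul, eval]
  | cons b l ih =>
    simp only [smul, List.map_cons, eval] at ih ⊢
    rw [ih]
    push_cast
    ring

theorem eval_mul (l m : List ℤ) (x : ℝ) : eval (mul l m) x = eval l x * eval m x := by
  induction l with
  | nil => simp [mul, eval]
  | cons a l ih =>
    simp only [mul, eval_add, eval_smul, eval, ih]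
    push_cast
    ring

theorem hasDerivAt_eval (l : List ℤ) (x : ℝ) : HasDerivAt (eval l) (eval (deriv l) x) x := by
  induction l with
  | nil => exact hasDerivAt_const x 0
  | cons a l ih =>
    have := ((hasDerivAt_id x).mul ih).const_add (a : ℝ)
    refine this.congr_deriv ?_
    simp [deriv, eval_add, eval]

theorem norm_nonneg (l : List ℤ) : 0 ≤ norm l := by
  induction l with
  | nil => exact le_rfl
  | cons a l ih => exact add_nonneg (abs_nonneg a) ih

theorem abs_eval_le (l : List ℤ) {x : ℝ} (hx : |x| ≤ 1) : |eval l x| ≤ norm l := by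
  induction l with
  | nil => simp [eval, norm]
  | cons a l ih =>
    simp only [eval, norm]
    push_cast
    refine (abs_add_le _ _).trans (add_le_add le_rfl ?_)
    rw [abs_mul]
    calc |x| * |eval l x| ≤ 1 * norm l := by gcongr
      _ = norm l := one_mul _

theorem lower_le_eval (l : List ℤ) {x : ℝ} (hx : |x| ≤ 1) : (lower l : ℝ) ≤ eval l x := by
  cases l with
  | nil => simp [eval, lower]
  | cons a l =>
    simp only [eval, lower]
    push_cast
    have h1 : |x * eval l x| ≤ norm l := by
      rw [abs_mul]
      calc |x| * |eval l x| ≤ 1 * norm l := by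
            gcongr
            exact abs_eval_le l hx
        _ = norm l := one_mul _
    linarith [neg_abs_le (x * eval l x)]

theorem eval_zero (l : List ℤ) : eval l 0 = (l.headD 0 : ℤ) := by
  cases l <;> simp [eval]

theorem eval_add_eval_neg (l : List ℤ) (x : ℝ) :
    eval l x + eval l (-x) = 2 * eval (evens l) (x ^ 2) := by
  induction l using evens.induct with
  | case1 => simp [eval, evens]
  | case2 a =>
    simp only [eval, evens]
    ring
  | case3 a b l ih =>
    simp only [eval, evens]
    linear_combination x ^ 2 * ih

theorem eval_subst {c : ℤ} (hc : c ≠ 0) (l : List ℤ) (x : ℝ) :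
    eval (subst c l) x = c ^ l.length * eval l ((c - 2 - 2 * x) / c) := by
  have hc' : (c : ℝ) ≠ 0 := by exact_mod_cast hc
  induction l with
  | nil => simp [subst, eval]
  | cons a l ih =>
    simp only [subst, eval_add, eval_mul, eval, ih, List.length_cons]
    push_cast
    field_simp
    ring

end CoeffList

/-! ### Rational approximation of logarithms -/

/-- Partial sum of the expansion of `log y` in powers of `z = (y - 1) / (y + 1)`. -/
def logSum (y : ℚ) : ℕ → ℚ
  | 0 => 0
  | n + 1 => logSum y n + 2 * ((y - 1) / (y + 1)) ^ (2 * n + 1) / (2 * n + 1)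

theorem abs_log_sub_logSum_le {y : ℚ} (h1 : 1 ≤ y) (h2 : y ≤ 2) (n : ℕ) :
    |Real.log y - logSum y n| ≤ 1 / 9 ^ n := by
  have h1' : (1 : ℝ) ≤ y := by exact_mod_cast h1
  have h2' : (y : ℝ) ≤ 2 := by exact_mod_cast h2
  set z : ℝ := (y - 1) / (y + 1) with hz
  have hz0 : 0 ≤ z := div_nonneg (by linarith) (by linarith)
  have hz1 : z ≤ 1 / 3 := by
    rw [hz, div_le_div_iff₀ (by linarith) (by norm_num)]
    linarith
  have hy : (1 + z) / (1 - z) = y := by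
    have h3 : (y : ℝ) + 1 ≠ 0 := by linarith
    have h4 : 1 + z = 2 * y / (y + 1) := by
      rw [hz]
      field_simp
      ring
    have h5 : 1 - z = 2 / (y + 1) := by
      rw [hz]
      field_simp
      ring
    rw [h4, h5]
    field_simp
  have hsum : (logSum y n : ℝ) = 2 * ∑ i ∈ Finset.range n, z ^ (2 * i + 1) / (2 * i + 1) := by
    induction n with
    | zero => simp [logSum]
    | succ n ih =>
      rw [Finset.sum_range_succ, mul_add, ← ih, logSum]
      push_cast
      rw [hz]
      ring
  have hlo := Real.sum_range_le_log_div hz0 (by linarith) n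
  have hhi := Real.log_div_le_sum_range_add hz0 (by linarith) n
  have hpow : z ^ (2 * n + 1) / (1 - z ^ 2) ≤ 1 / 2 * (1 / 9 ^ n) := by
    have h3 : z ^ 2 ≤ 1 / 9 := by nlinarith
    have h4 : z ^ (2 * n + 1) ≤ 1 / 9 ^ n * (1 / 3) := by
      rw [pow_succ, pow_mul]
      calc (z ^ 2) ^ n * z ≤ (1 / 9) ^ n * (1 / 3) := by gcongr
        _ = _ := by rw [one_div_pow]
    rw [div_le_iff₀ (by linarith)]
    have h5 : (0 : ℝ) ≤ 1 / 9 ^ n := by positivity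
    nlinarith
  rw [hy] at hlo hhi
  rw [hsum, abs_le]
  constructor <;> nlinarith [show (0 : ℝ) ≤ 1 / 9 ^ n by positivity]

/-! ### Certified approximate eigenfunctions -/

section Certificate

open CoeffList

/-- Numerator of the logarithmic derivative of
`eval H x / (eval P x * (c - 2 - 2 * x) ^ (s / 2))` for `s = a / 10 ^ 20`. -/
def logDerivNum (c a : ℤ) (P H : List ℤ) : List ℤ :=
  add (mul P (add (smul a H) (smul (10 ^ 20) (mul [c - 2, -2] (deriv H)))))
    (mul (deriv P) (smul (-10 ^ 20) (mul [c - 2, -2] H)))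

/-- The polynomial `P` is, up to the relative error `10 ^ (-16)`, a fixed function of the transfer
operator with exponent `a / 10 ^ 20` in the coordinate `τ = 2 * x / c - 1`. The integer `k` is used
to reduce `c * (c - 2)` to the interval `[1, 2]`. -/
def IsApproxFixed (c a : ℤ) (k : ℕ) (P : List ℤ) : Prop :=
  let H := subst c (evens P)
  let s : ℚ := a / 10 ^ 20
  let y : ℚ := H.headD 0 / (c ^ (evens P).length * P.headD 0)
  let z : ℚ := c * (c - 2) / 2 ^ k
  (0 < lower P ∧ 0 < lower H ∧
    2 * 10 ^ 16 * norm (logDerivNum c a P H) ≤ 10 ^ 20 * (lower P * lower H)) ∧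
  (0 ≤ s ∧ s ≤ 1 ∧ k ≤ 7 ∧ 1 ≤ y ∧ y ≤ 2 ∧ 1 ≤ z ∧ z ≤ 2) ∧
  |(1 - s * k / 2) * logSum 2 25 + logSum y 25 - s / 2 * logSum z 25| ≤ 1 / 10 ^ 17

instance (c a : ℤ) (k : ℕ) (P : List ℤ) : Decidable (IsApproxFixed c a k P) := by
  unfold IsApproxFixed
  infer_instance

/-- The logarithm of `eval H x / (eval P x * (c - 2 - 2 * x) ^ (a / 10 ^ 20 / 2))`. -/
noncomputable def logQuotient (c a : ℤ) (P H : List ℤ) (x : ℝ) : ℝ :=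
  Real.log (eval H x) - Real.log (eval P x) - a / 10 ^ 20 / 2 * Real.log (c - 2 - 2 * x)

theorem abs_logQuotient_sub_le {c a : ℤ} {P H : List ℤ} (hc : 5 ≤ c) (hP : 0 < lower P)
    (hH : 0 < lower H) {x : ℝ} (hx : |x| ≤ 1) :
    |logQuotient c a P H x - logQuotient c a P H 0| ≤
      norm (logDerivNum c a P H) / (10 ^ 20 * (lower P * lower H)) := by
  have hc' : (5 : ℝ) ≤ c := by exact_mod_cast hc
  have hP' : (0 : ℝ) < lower P := by exact_mod_cast hP
  have hH' : (0 : ℝ) < lower H := by exact_mod_cast hH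
  have key : ∀ u ∈ Icc (-1 : ℝ) 1, HasDerivWithinAt (logQuotient c a P H)
      (eval (logDerivNum c a P H) u /
        (10 ^ 20 * (c - 2 - 2 * u) * (eval P u * eval H u))) (Icc (-1 : ℝ) 1) u := by
    intro u hu
    have hPu : 0 < eval P u := hP'.trans_le (lower_le_eval P (abs_le.2 hu))
    have hHu : 0 < eval H u := hH'.trans_le (lower_le_eval H (abs_le.2 hu))
    have hw : 0 < (c : ℝ) - 2 - 2 * u := by linarith [hu.2]
    have hlin : HasDerivAt (fun u : ℝ => (c : ℝ) - 2 - 2 * u) (-2) u := by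
      simpa using ((hasDerivAt_id u).const_mul (2 : ℝ)).const_sub ((c : ℝ) - 2)
    have := (((hasDerivAt_eval H u).log hHu.ne').sub ((hasDerivAt_eval P u).log hPu.ne')).sub
      ((hlin.log hw.ne').const_mul ((a : ℝ) / 10 ^ 20 / 2))
    refine (this.congr_deriv ?_).hasDerivWithinAt
    simp only [logDerivNum, eval_add, eval_smul, eval_mul, eval]
    push_cast
    field_simp
    ring
  have hbound : ∀ u ∈ Icc (-1 : ℝ) 1, ‖eval (logDerivNum c a P H) u /
      (10 ^ 20 * (c - 2 - 2 * u) * (eval P u * eval H u))‖ ≤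
      norm (logDerivNum c a P H) / (10 ^ 20 * (lower P * lower H)) := by
    intro u hu
    have hPu := lower_le_eval P (abs_le.2 hu)
    have hHu := lower_le_eval H (abs_le.2 hu)
    have hw : 1 ≤ (c : ℝ) - 2 - 2 * u := by linarith [hu.2]
    have hN := abs_eval_le (logDerivNum c a P H) (abs_le.2 hu)
    have hden : (10 : ℝ) ^ 20 * (lower P * lower H) ≤
        10 ^ 20 * (c - 2 - 2 * u) * (eval P u * eval H u) := by
      have : (lower P : ℝ) * lower H ≤ eval P u * eval H u :=
        mul_le_mul hPu hHu hH'.le (hP'.le.trans hPu)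
      calc (10 : ℝ) ^ 20 * (lower P * lower H)
          = 10 ^ 20 * 1 * (lower P * lower H) := by ring
        _ ≤ _ := by gcongr
    rw [norm_div, Real.norm_eq_abs, Real.norm_eq_abs,
      abs_of_pos ((by positivity : (0 : ℝ) < 10 ^ 20 * (lower P * lower H)).trans_le hden)]
    exact div_le_div₀ ((abs_nonneg _).trans hN) hN (by positivity) hden
  have := (convex_Icc (-1 : ℝ) 1).norm_image_sub_le_of_norm_hasDerivWithin_le key hbound
    (x := 0) (y := x) (by norm_num) (abs_le.1 hx)
  rw [sub_zero, Real.norm_eq_abs, Real.norm_eq_abs] at this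
  refine this.trans (mul_le_of_le_one_right ?_ hx)
  exact (_root_.norm_nonneg _).trans (hbound 0 (by norm_num))

theorem IsApproxFixed.abs_log_le {c a : ℤ} {k : ℕ} {P : List ℤ} (h : IsApproxFixed c a k P)
    (hc : 5 ≤ c) {x : ℝ} (hx : |x| ≤ 1) :
    |Real.log 2 + Real.log (eval (evens P) ((c - 2 - 2 * x) / c)) - Real.log (eval P x) -
      a / 10 ^ 20 / 2 * Real.log (c * (c - 2 - 2 * x))| ≤ 1 / 10 ^ 16 := by
  obtain ⟨⟨hP, hH, hN⟩, ⟨hs0, hs1, hk, hy1, hy2, hz1, hz2⟩, hlog⟩ := h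
  have hvar := abs_logQuotient_sub_le (a := a) hc hP hH hx
  set H := subst c (evens P) with hHdef
  set s : ℚ := a / 10 ^ 20 with hs
  set y : ℚ := H.headD 0 / (c ^ (evens P).length * P.headD 0) with hy
  set z : ℚ := c * (c - 2) / 2 ^ k with hz
  have hc' : (5 : ℝ) ≤ c := by exact_mod_cast hc
  have hP' : (0 : ℝ) < lower P := by exact_mod_cast hP
  have hH' : (0 : ℝ) < lower H := by exact_mod_cast hH
  have hsr : (a : ℝ) / 10 ^ 20 = s := by
    rw [hs]
    push_cast
    rfl
  have hvar' : |logQuotient c a P H x - logQuotient c a P H 0| ≤ 1 / (2 * 10 ^ 16) := by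
    refine hvar.trans ?_
    rw [div_le_div_iff₀ (by positivity) (by positivity)]
    have : (2 * 10 ^ 16 * norm (logDerivNum c a P H) : ℝ) ≤ 10 ^ 20 * (lower P * lower H) := by
      exact_mod_cast hN
    linarith
  have hw : 0 < (c : ℝ) - 2 - 2 * x := by linarith [(abs_le.1 hx).2]
  have hHx : 0 < eval H x := hH'.trans_le (lower_le_eval H hx)
  have hE : Real.log (eval (evens P) ((c - 2 - 2 * x) / c)) =
      Real.log (eval H x) - (evens P).length * Real.log c := by
    rw [hHdef, eval_subst (by omega)] at hHx ⊢
    have hE0 := (pos_iff_pos_of_mul_pos hHx).1 (by positivity)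
    rw [Real.log_mul (by positivity) hE0.ne', Real.log_pow]
    ring
  have hP0 : (0 : ℝ) < eval P 0 := hP'.trans_le (lower_le_eval P (by simp))
  have hH0 : (0 : ℝ) < eval H 0 := hH'.trans_le (lower_le_eval H (by simp))
  have hly : Real.log y =
      Real.log (eval H 0) - (evens P).length * Real.log c - Real.log (eval P 0) := by
    rw [hy]
    push_cast
    rw [← eval_zero, ← eval_zero, Real.log_div hH0.ne' (by positivity),
      Real.log_mul (by positivity) hP0.ne', Real.log_pow]
    ring
  have hlz : Real.log z = Real.log c + Real.log (c - 2) - k * Real.log 2 := by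
    have h2 : (0 : ℝ) < c - 2 := by linarith
    rw [hz]
    push_cast
    rw [Real.log_div (by positivity) (by positivity), Real.log_mul (by positivity) h2.ne',
      Real.log_pow]
  have e2 := abs_le.1 (abs_log_sub_logSum_le (y := 2) (by norm_num) (by norm_num) 25)
  have ey := abs_le.1 (abs_log_sub_logSum_le hy1 hy2 25)
  have ez := abs_le.1 (abs_log_sub_logSum_le hz1 hz2 25)
  have hlog' : |(1 - s * k / 2) * (logSum 2 25 : ℝ) + logSum y 25 - s / 2 * logSum z 25| ≤
      1 / 10 ^ 17 := by
    have := (Rat.cast_le (K := ℝ)).2 hlog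
    push_cast at this
    exact this
  have hs0' : (0 : ℝ) ≤ s := by exact_mod_cast hs0
  have hs1' : (s : ℝ) ≤ 1 := by exact_mod_cast hs1
  have hk' : (k : ℝ) ≤ 7 := by exact_mod_cast hk
  have hzero : |(1 - s * k / 2) * Real.log 2 + Real.log y - s / 2 * Real.log z| ≤
      1 / (2 * 10 ^ 16) := by
    have hu : |(1 - s * k / 2) * (Real.log 2 - logSum 2 25)| ≤ 5 * (1 / 9 ^ 25) := by
      rw [abs_mul]
      gcongr
      · rw [abs_le]
        have : (0 : ℝ) ≤ k := k.cast_nonneg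
        constructor <;> nlinarith
      · exact_mod_cast abs_le.2 e2
    have hv : |s / 2 * (Real.log z - logSum z 25)| ≤ 1 * (1 / 9 ^ 25) := by
      rw [abs_mul]
      gcongr
      · rw [abs_of_nonneg (by positivity)]
        linarith
      · exact abs_le.2 ez
    rw [abs_le] at hu hv hlog' ⊢
    norm_num at hu hv hlog' ey ⊢
    constructor <;> linarith
  rw [hE, Real.log_mul (by positivity) hw.ne', hsr]
  rw [hly, hlz] at hzero
  simp only [logQuotient, hsr, mul_zero, sub_zero] at hvar'
  rw [abs_le] at hvar' hzero ⊢
  constructor <;> linarith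

end Certificate

/-! ### Dimension bounds from certificates -/

namespace IsApproxFixed

open CoeffList

variable {d k : ℕ} {a : ℤ} {P : List ℤ} {x t : ℝ}

theorem abs_coord_le (hx : x ∈ Icc 0 (3 + (d : ℝ))) : |2 * x / (3 + d) - 1| ≤ 1 := by
  have hc : (0 : ℝ) < 3 + d := by positivity
  have h1 : 2 * x / (3 + d) ≤ 2 := by
    rw [div_le_iff₀ hc]
    linarith [hx.2]
  have h0 : 0 ≤ 2 * x / (3 + d) := div_nonneg (by linarith [hx.1]) hc.le
  rw [abs_le]
  constructor <;> linarith

theorem sum_eq_exp (h : IsApproxFixed (3 + d) a k P) (hd : 2 ≤ d)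
    (hx : x ∈ Icc 0 (3 + (d : ℝ))) (t : ℝ) :
    ∑ b, (1 / √((3 + (d : ℝ)) ^ 2 - 4 * x)) ^ t * eval P (2 * branch d b x / (3 + d) - 1) =
      Real.exp (Real.log 2 + Real.log (eval (evens P)
        ((((3 + d : ℤ) : ℝ) - 2 - 2 * (2 * x / (3 + d) - 1)) / ((3 + d : ℤ) : ℝ))) -
        t / 2 * Real.log ((3 + (d : ℝ)) ^ 2 - 4 * x)) := by
  have hc : (0 : ℝ) < 3 + d := by positivity
  have hsq := sqrt_disc_sq hd hx
  have hge := two_le_sqrt_disc hd hx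
  have hE : 0 < eval (evens P)
      ((((3 + d : ℤ) : ℝ) - 2 - 2 * (2 * x / (3 + d) - 1)) / ((3 + d : ℤ) : ℝ)) := by
    obtain ⟨⟨-, hH, -⟩, -, -⟩ := h
    have hpos : (0 : ℝ) < eval (subst (3 + d) (evens P)) (2 * x / (3 + d) - 1) :=
      (Int.cast_pos.2 hH).trans_le (lower_le_eval _ (abs_coord_le hx))
    rw [eval_subst (by omega)] at hpos
    exact (pos_iff_pos_of_mul_pos hpos).1 (by push_cast; positivity)
  have hσ : (((3 + d : ℤ) : ℝ) - 2 - 2 * (2 * x / (3 + d) - 1)) / ((3 + d : ℤ) : ℝ) =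
      (√((3 + (d : ℝ)) ^ 2 - 4 * x) / (3 + d)) ^ 2 := by
    rw [div_pow, hsq]
    push_cast
    field_simp
    ring
  have ht : 2 * branch d true x / (3 + d) - 1 = √((3 + (d : ℝ)) ^ 2 - 4 * x) / (3 + d) := by
    simp only [branch, Sd, cond_true]
    field_simp
    ring
  have hf : 2 * branch d false x / (3 + d) - 1 = -(√((3 + (d : ℝ)) ^ 2 - 4 * x) / (3 + d)) := by
    simp only [branch, Sd, cond_false]
    field_simp
    ring
  have hpow : (1 / √((3 + (d : ℝ)) ^ 2 - 4 * x)) ^ t =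
      Real.exp (-(t / 2 * Real.log ((3 + (d : ℝ)) ^ 2 - 4 * x))) := by
    rw [Real.rpow_def_of_pos (by positivity), one_div, Real.log_inv, Real.log_sqrt (by
      rw [← hsq]
      positivity)]
    ring_nf
  rw [Fintype.sum_bool, ht, hf, ← mul_add, eval_add_eval_neg, ← hσ, hpow, Real.exp_neg,
    Real.exp_sub, Real.exp_add, Real.exp_log two_pos, Real.exp_log hE]
  ring

theorem one_le_log_disc (hd : 2 ≤ d) (hx : x ∈ Icc 0 (3 + (d : ℝ))) :
    1 ≤ Real.log ((3 + (d : ℝ)) ^ 2 - 4 * x) := by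
  have hd' : (2 : ℝ) ≤ d := by exact_mod_cast hd
  rw [Real.le_log_iff_exp_le (by nlinarith [hx.2])]
  nlinarith [hx.2, Real.exp_one_lt_d9]

theorem abs_log_disc_le (h : IsApproxFixed (3 + d) a k P) (hd : 2 ≤ d)
    (hx : x ∈ Icc 0 (3 + (d : ℝ))) :
    |Real.log 2 + Real.log (eval (evens P)
        ((((3 + d : ℤ) : ℝ) - 2 - 2 * (2 * x / (3 + d) - 1)) / ((3 + d : ℤ) : ℝ))) -
        Real.log (eval P (2 * x / (3 + d) - 1)) -
        a / 10 ^ 20 / 2 * Real.log ((3 + (d : ℝ)) ^ 2 - 4 * x)| ≤ 1 / 10 ^ 16 := by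
  have hc : (0 : ℝ) < 3 + d := by positivity
  have hW : ((3 + d : ℤ) : ℝ) * (((3 + d : ℤ) : ℝ) - 2 - 2 * (2 * x / (3 + d) - 1)) =
      (3 + (d : ℝ)) ^ 2 - 4 * x := by
    push_cast
    field_simp
    ring
  have := h.abs_log_le (by omega) (abs_coord_le hx)
  rwa [hW] at this

theorem lower_pos (h : IsApproxFixed (3 + d) a k P) : (0 : ℝ) < lower P :=
  Int.cast_pos.2 h.1.1

theorem sum_le (h : IsApproxFixed (3 + d) a k P) (hd : 2 ≤ d)
    (hx : x ∈ Icc 0 (3 + (d : ℝ))) (ht : (a : ℝ) / 10 ^ 20 + 2 / 10 ^ 16 ≤ t) :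
    ∑ b, (1 / √((3 + (d : ℝ)) ^ 2 - 4 * x)) ^ t * eval P (2 * branch d b x / (3 + d) - 1) ≤
      eval P (2 * x / (3 + d) - 1) := by
  have hF := h.lower_pos.trans_le (lower_le_eval P (abs_coord_le hx))
  have h1 := one_le_log_disc hd hx
  have h2 := (abs_le.1 (h.abs_log_disc_le hd hx)).2
  rw [h.sum_eq_exp hd hx, ← Real.le_log_iff_exp_le hF]
  nlinarith

theorem le_sum (h : IsApproxFixed (3 + d) a k P) (hd : 2 ≤ d)
    (hx : x ∈ Icc 0 (3 + (d : ℝ))) (ht : t ≤ (a : ℝ) / 10 ^ 20 - 2 / 10 ^ 16) :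
    eval P (2 * x / (3 + d) - 1) ≤
      ∑ b, (1 / √((3 + (d : ℝ)) ^ 2 - 4 * x)) ^ t * eval P (2 * branch d b x / (3 + d) - 1) := by
  have hF := h.lower_pos.trans_le (lower_le_eval P (abs_coord_le hx))
  have h1 := one_le_log_disc hd hx
  have h2 := (abs_le.1 (h.abs_log_disc_le hd hx)).1
  rw [h.sum_eq_exp hd hx, ← Real.log_le_iff_le_exp hF]
  nlinarith

theorem eval_le_mul_exp (h : IsApproxFixed (3 + d) a k P) {y : ℝ}
    (hx : x ∈ Icc 0 (3 + (d : ℝ))) (hy : y ∈ Icc 0 (3 + (d : ℝ))) :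
    eval P (2 * x / (3 + d) - 1) ≤ eval P (2 * y / (3 + d) - 1) *
      Real.exp (CoeffList.norm (CoeffList.deriv P) / lower P * dist x y) := by
  have hm := h.lower_pos
  have hFy := lower_le_eval P (abs_coord_le hy)
  have hlip : ‖eval P (2 * x / (3 + d) - 1) - eval P (2 * y / (3 + d) - 1)‖ ≤
      CoeffList.norm (CoeffList.deriv P) * ‖(2 * x / (3 + d) - 1) - (2 * y / (3 + d) - 1)‖ :=
    (convex_Icc (-1 : ℝ) 1).norm_image_sub_le_of_norm_hasDerivWithin_le
      (fun u _ => (hasDerivAt_eval P u).hasDerivWithinAt)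
      (fun u hu => abs_eval_le _ (abs_le.2 hu)) (abs_le.1 (abs_coord_le hy))
      (abs_le.1 (abs_coord_le hx))
  have hcoord : ‖(2 * x / (3 + d) - 1) - (2 * y / (3 + d) - 1)‖ ≤ dist x y := by
    have hc : (0 : ℝ) < 3 + d := by positivity
    have : (2 * x / (3 + d) - 1) - (2 * y / (3 + d) - 1) = 2 / (3 + d) * (x - y) := by
      field_simp
      ring
    rw [this, norm_mul, Real.dist_eq, Real.norm_eq_abs, Real.norm_eq_abs,
      abs_of_pos (by positivity)]
    refine mul_le_of_le_one_left (abs_nonneg _) ?_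
    rw [div_le_one hc]
    linarith [(d.cast_nonneg : (0 : ℝ) ≤ d)]
  have hℓ : (0 : ℝ) ≤ CoeffList.norm (CoeffList.deriv P) :=
    Int.cast_nonneg (CoeffList.norm_nonneg _)
  set ℓ : ℝ := ((CoeffList.norm (CoeffList.deriv P) : ℤ) : ℝ)
  have hdist : 0 ≤ dist x y := dist_nonneg
  calc eval P (2 * x / (3 + d) - 1)
      ≤ eval P (2 * y / (3 + d) - 1) + ℓ * dist x y := by
        have := (le_abs_self _).trans (hlip.trans (mul_le_mul_of_nonneg_left hcoord hℓ))
        linarith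
    _ = eval P (2 * y / (3 + d) - 1) + lower P * (ℓ / lower P * dist x y) := by
        field_simp
    _ ≤ eval P (2 * y / (3 + d) - 1) +
        eval P (2 * y / (3 + d) - 1) * (ℓ / lower P * dist x y) := by gcongr
    _ = eval P (2 * y / (3 + d) - 1) * (ℓ / lower P * dist x y + 1) := by ring
    _ ≤ _ := by
        gcongr
        · exact hm.le.trans hFy
        · exact Real.add_one_le_exp _

variable {J : Set ℝ}

theorem dimH_le (h : IsApproxFixed (3 + d) a k P) (hd : 2 ≤ d)
    (hsub : J ⊆ Icc 0 (3 + (d : ℝ))) (hne : J.Nonempty)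
    (heq : J = Sd d (-1) '' J ∪ Sd d 1 '' J) (ht0 : 0 ≤ t)
    (ht : (a : ℝ) / 10 ^ 20 + 2 / 10 ^ 16 ≤ t) : dimH J ≤ ENNReal.ofReal t :=
  (conformalIFS_branch hd hsub heq le_rfl).dimH_le hne ((Metric.isBounded_Icc _ _).subset hsub)
    ht0 h.lower_pos (F := fun x => eval P (2 * x / (3 + d) - 1))
    (fun _ hx => lower_le_eval P (abs_coord_le (hsub hx))) (fun _ hx => h.sum_le hd (hsub hx) ht)

theorem le_dimH (h : IsApproxFixed (3 + d) a k P) (hd : 2 ≤ d)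
    (hsub : J ⊆ Icc 0 (3 + (d : ℝ))) (hne : J.Nonempty) (hcl : IsClosed J)
    (heq : J = Sd d (-1) '' J ∪ Sd d 1 '' J) (ht0 : 0 < t) (ht1 : t ≤ 1)
    (ht : t ≤ (a : ℝ) / 10 ^ 20 - 2 / 10 ^ 16) : ENNReal.ofReal t ≤ dimH J := by
  refine (conformalIFS_branch hd hsub heq (le_max_left 1
    ((CoeffList.norm (CoeffList.deriv P) : ℝ) / lower P))).le_dimH hne
    (isCompact_Icc.of_isClosed_subset hcl hsub) ht0 ht1 h.lower_pos
    (F := fun x => eval P (2 * x / (3 + d) - 1)) (M := CoeffList.norm P)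
    (fun _ hx => lower_le_eval P (abs_coord_le (hsub hx)))
    (fun _ hx => (le_abs_self _).trans (abs_eval_le P (abs_coord_le (hsub hx)))) ?_
    (fun _ hx => h.le_sum hd (hsub hx) ht)
  intro x hx y hy
  refine (h.eval_le_mul_exp (hsub hx) (hsub hy)).trans ?_
  gcongr
  · exact h.lower_pos.le.trans (lower_le_eval P (abs_coord_le (hsub hy)))
  · exact le_max_right _ _

end IsApproxFixed

/-! ### The certificates

Truncated Taylor coefficients, in the coordinate `τ`, of the positive fixed functions of the
transfer operators for `2 ≤ d ≤ 10`. -/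

/-- The exponents at which the transfer operators have spectral radius one, times `10 ^ 20`. -/
def exponentNum : ℕ → ℤ
  | 2 => 55161856837246093170
  | 3 => 45183750018171082104
  | 4 => 39795943979056201243
  | 5 => 36287714809375968472
  | 6 => 33770271892130528138
  | 7 => 31850809575800524989
  | 8 => 30324865557723068909
  | 9 => 29074069840192699454
  | 10 => 28024518050407582184
  | _ => 0

/-- Approximate fixed functions of the transfer operators. -/
def eigenPoly : ℕ → List ℤ
  | 2 =>
    [10000000000000000000000, 1416129686053885170392, 766541546931900992633, 362507991588941189767,
     204229405732174345367, 115490408681174641643, 68039871082284167281, 40649086619563320473,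
     24674842489690810845, 15131293285246022503, 9361410252270793307, 5831847628718168751,
     3654294596813624410, 2301003733842932142, 1454937965885323793, 923285067071649868,
     587750150907904953, 375190052263821593, 240090924981667028, 153975605870325020,
     98942566466580272, 63692283408979975, 41066872795342816, 26517696679507523, 17146099154821415,
     11100251139554389, 7194429048396100, 4667869879249568, 3031564951935971, 1970657091486303,
     1282107992040350, 834801929229799, 543958510232662, 354692338656121, 231432053506057,
     151099979984896, 98709605071733, 64520047426405, 42194655649721, 27608064408091,
     18072546161520, 11835797485697, 7754631446570, 5082782925719, 3332810601632, 2186154382512,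
     1434514987335, 941622484279, 618286598612, 406104989450, 266819055684, 175355848433,
     115277282188, 75802356472, 49857774114, 32801235214, 21584937597, 14207283223, 9353356038,
     6159093587, 4056541618, 2672279654, 1760726477, 1160334553, 764809617, 504196476, 332445375,
     219236364, 144602089, 95390297, 62936059, 41529695, 27408168, 18090961, 11942686, 7884960,
     5206581, 3438429, 2271016, 1500140, 991045, 654793, 432676, 285935, 188981, 124914, 82575,
     54592, 36096, 23868, 15784, 10439, 6905, 4567, 3021, 1999, 1323, 875]
  | 3 =>
    [10000000000000000000000, 992706434920734782245, 338894197724173466006, 124015363291484681487,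
     50294738607467881732, 21262412327001476128, 9267714692808204591, 4123368844908610730,
     1862888802073232300, 851568873093089796, 392911984392117589, 182663737517026022,
     85452916325522091, 40187284553806779, 18984628999037668, 9003274503094936, 4284185164384982,
     2044695581187433, 978442139142617, 469315275729595, 225586480314978, 108640365894773,
     52410998361387, 25324458236237, 12254238126798, 5937585378288, 2880486007194, 1398988185600,
     680172490773, 331015946842, 161240796588, 78608815838, 38354335450, 18727650693, 9150786128,
     4474269000, 2189062499, 1071646981, 524915210, 257251417, 126137998, 61878934, 30369555,
     14911571, 7324687, 3599377, 1769419, 870146, 428060, 210650, 103695, 51061, 25151, 12392, 6107,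
     3011, 1484, 732]
  | 4 =>
    [10000000000000000000000, 734924752650262453912, 187849322658317337125, 54872442728891387161,
     17592441203296978725, 5913262240234700390, 2050504066324805220, 726573424423608152,
     261589817885085984, 95339839442981476, 35086016941670473, 13013871445888791, 4858515528915661,
     1823799796240157, 687824894752171, 260452307699730, 98970078447802, 37724309910068,
     14418762218723, 5524539920142, 2121374994065, 816205396327, 314602742320, 121461175853,
     46963892222, 18183996977, 7049633360, 2736239704, 1063200580, 413539146, 161001033, 62737106,
     24466948, 9549323, 3729776, 1457780, 570142, 223122, 87368, 34230, 13418, 5262, 2065, 811]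
  | 5 =>
    [10000000000000000000000, 572550314045800599566, 117703731604846308584, 28502637843100557829,
     7565847749484978541, 2110088616302531680, 607599532789999155, 178888276454833195,
     53536577622164160, 16224395688103792, 4965909939664137, 1532240526731090, 475936705817462,
     148664009293448, 46659342771041, 14704929684182, 4651028867833, 1475735802183, 469553997434,
     149778291597, 47883700891, 15339362577, 4922957742, 1582607977, 509550571, 164290980, 53040153,
     17144230, 5547733, 1797064, 582682, 189100, 61421, 19966, 6495, 2114]
  | 6 =>
    [10000000000000000000000, 463424258681544583855, 79850138028045940609, 16493547624958010454,
     3736251276344083691, 890372580449581665, 219203184943797179, 55201809047349330,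
     14134951913594729, 3665914093427207, 960414216046600, 253684202792971, 67464003885510,
     18043741297994, 4849447237595, 1308818632936, 354531206076, 96344234302, 26256354588,
     7173768962, 1964499057, 539077752, 148205115, 40814572, 11257574, 3109544, 860047, 238165,
     66028, 18325, 5091, 1415]
  | 7 =>
    [10000000000000000000000, 386042861614186456695, 57301604049543657855, 10314047791174417943,
     2037719338478127711, 423887458962307638, 91138513475086069, 20050419543850589,
     4486198606317692, 1016844738386766, 232850324091880, 53765508783738, 12500065562809,
     2922995146994, 686881320287, 162098777289, 38395942709, 9124404198, 2174585160, 519596444,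
     124439874, 29864761, 7180929, 1729623, 417261, 100808, 24387, 5907]
  | 8 =>
    [10000000000000000000000, 328802760013627914816, 42883447848251279734, 6837660374520787201,
     1197733327331933298, 221049995366520753, 42182264985072811, 8238519239590531, 1636742206671825,
     329451357363371, 67002977980916, 13741629082009, 2837879240795, 589497331668, 123063346113,
     25801094974, 5429637388, 1146385934, 242748037, 51535826, 10966702, 2338609, 499654, 106939,
     22924, 4921]
  | 9 =>
    [10000000000000000000000, 285015793490438098520, 33156356821469920560, 4744277677303318079,
     746384017991743791, 123783221724426095, 21232652914739888, 3728345876485428, 666045658037754,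
     120564584280937, 22052848027633, 4067999238264, 755671633875, 141201090881, 26516684600,
     5001240816, 946830938, 179848036, 34262082, 6544241, 1252928, 240389, 46210, 8899, 1716, 332]
  | 10 =>
    [10000000000000000000000, 250598955399333985571, 26312109484906530420, 3414244287856218429,
     487461573428494284, 73397817109986542, 11433549346289363, 1823573926400447, 295934177604475,
     48667052748269, 8087894263038, 1355602012025, 228815560075, 38851581184, 6630138123,
     1136386998, 195513542, 33750130, 5843286, 1014340, 176497, 30777, 5377, 941]
  | _ => []

theorem exists_isApproxFixed {d : ℕ} (hd2 : 2 ≤ d) (hd10 : d ≤ 10) :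
    ∃ k, IsApproxFixed (3 + d) (exponentNum d) k (eigenPoly d) := by
  interval_cases d
  · exact ⟨3, by decide +kernel⟩
  · exact ⟨4, by decide +kernel⟩
  · exact ⟨5, by decide +kernel⟩
  · exact ⟨5, by decide +kernel⟩
  · exact ⟨5, by decide +kernel⟩
  · exact ⟨6, by decide +kernel⟩
  · exact ⟨6, by decide +kernel⟩
  · exact ⟨6, by decide +kernel⟩
  · exact ⟨7, by decide +kernel⟩

theorem v_bounds {d : ℕ} (hd2 : 2 ≤ d) (hd10 : d ≤ 10) :
    0 < v d ∧ v d ≤ 1 ∧ v d ≤ (exponentNum d : ℝ) / 10 ^ 20 - 2 / 10 ^ 16 ∧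
      (exponentNum d : ℝ) / 10 ^ 20 + 2 / 10 ^ 16 ≤ v d + 1e-14 := by
  interval_cases d <;> norm_num [v, exponentNum]

theorem stmt_3 (d : ℕ) (hd2 : 2 ≤ d) (hd10 : d ≤ 10) (J : Set ℝ)
    (hsub : J ⊆ Set.Icc 0 (3 + (d:ℝ))) (hne : J.Nonempty) (hcl : IsClosed J)
    (heq : J = Sd d (-1) '' J ∪ Sd d 1 '' J)
    (hmin : ∀ J' : Set ℝ, J' ⊆ Set.Icc 0 (3 + (d:ℝ)) → J'.Nonempty → IsClosed J' →
      J' = Sd d (-1) '' J' ∪ Sd d 1 '' J' → J ⊆ J') :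
    ENNReal.ofReal (v d) ≤ dimH J ∧ dimH J ≤ ENNReal.ofReal (v d + 1e-14) := by
  obtain ⟨k, h⟩ := exists_isApproxFixed hd2 hd10
  obtain ⟨hpos, hle, hlow, hupp⟩ := v_bounds hd2 hd10
  exact ⟨h.le_dimH hd2 hsub hne hcl heq hpos hle hlow,
    h.dimH_le hd2 hsub hne heq (by linarith) hupp⟩
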